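/- arXiv:2206.02154 — 2 statements merged into one kernel-verified Lean document; each statement's English description precedes it below -/
import Mathlib

section
/- First fundamental theorem of FC for the 1st level general fractional derivative: let (κ, k₁, k₂) ∈ L₁¹ and let f ∈ C_{-1,(k₁)}(0,∞), i.e. f = k₁ * φ for some φ ∈ C_{-1}(0,∞). Then, with g = κ * f, the function k₂ * g is differentiable on (0,∞), its derivative belongs to C_{-1}(0,∞), and (k₁ * d/dt (k₂ * g))(t) = f(t) for all t > 0; that is, ( 1L D_{(k₁,k₂)} I_{(κ)} f)(t) = f(t), so the 1st level GFD is a left inverse operator to I_{(κ)} on C_{-1,(k₁)}(0,∞). -/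
open Real Filter MeasureTheory intervalIntegral

/-- The Laplace convolution `(f * g)(t) = ∫_0^t f(t-τ) g(τ) dτ`. -/
noncomputable def lconv (f g : ℝ → ℝ) : ℝ → ℝ :=
  fun t => ∫ τ in (0:ℝ)..t, f (t - τ) * g τ

/-- The space `C_{-1}(0,∞)`: functions representable as `t^p f₁(t)` with `p > -1`
and `f₁` continuous on `[0,∞)`. -/
def CMinusOne (f : ℝ → ℝ) : Prop :=
  ∃ p : ℝ, p > -1 ∧ ∃ f₁ : ℝ → ℝ, ContinuousOn f₁ (Set.Ici 0) ∧
    ∀ t > (0:ℝ), f t = t ^ p * f₁ t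


/-- The class `L₁¹` of triples of 1st level kernels: `κ, k₁, k₂ ∈ C_{-1}(0,∞)` with
`(κ * k₁ * k₂)(t) = 1` for all `t > 0`. -/
def FirstLevelKernels (κ k₁ k₂ : ℝ → ℝ) : Prop :=
  CMinusOne κ ∧ CMinusOne k₁ ∧ CMinusOne k₂ ∧ ∀ t > (0:ℝ), lconv κ (lconv k₁ k₂) t = 1


/-!
On `(0,∞)` the Laplace convolution is the restriction of the convolution on `ℝ` of the extensions
by zero, so it is commutative and, on `C_{-1}(0,∞)`, associative. The substitution `τ = t u` gives
`(s^p f₁ * s^q g₁)(t) = t^(p+q+1) ∫₀¹ (1-u)^p u^q f₁(t(1-u)) g₁(tu) du`, which shows that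
`C_{-1}(0,∞)` is closed under convolution. Hence
`k₂ * κ * k₁ * φ = (κ * k₁ * k₂) * φ = 1 * φ = ∫₀ᵗ φ`, whose derivative is `φ` by the fundamental
theorem of calculus.
-/

open Set
open scoped Convolution Interval

theorem continuous_parametric_intervalIntegral_smul {X E : Type*} [TopologicalSpace X]
    [FirstCountableTopology X] [WeaklyLocallyCompactSpace X] [NormedAddCommGroup E]
    [NormedSpace ℝ E] {μ : Measure ℝ} {a b : ℝ} {w : ℝ → ℝ} (hw : IntervalIntegrable w μ a b)
    {F : X → ℝ → E} (hF : Continuous F.uncurry) :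
    Continuous fun x => ∫ u in a..b, w u • F x u ∂μ := by
  rw [continuous_iff_continuousAt]
  intro x₀
  obtain ⟨U, hU_compact, hU_nhds⟩ := exists_compact_mem_nhds x₀
  obtain ⟨C, hC⟩ :=
    (hU_compact.prod (isCompact_uIcc (a := a) (b := b))).exists_bound_of_continuousOn
      hF.continuousOn
  refine continuousAt_of_dominated_interval (bound := fun u => ‖w u‖ * C) ?_ ?_
    (hw.norm.mul_const C) ?_
  · filter_upwards with x
    exact hw.def'.aestronglyMeasurable.smul (Continuous.aestronglyMeasurable (by fun_prop))
  · filter_upwards [hU_nhds] with x hx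
    filter_upwards with u hu
    rw [norm_smul]
    gcongr
    exact hC (x, u) ⟨hx, uIoc_subset_uIcc hu⟩
  · filter_upwards with u _
    exact Continuous.continuousAt (by fun_prop)

theorem intervalIntegrable_sub_rpow_mul_rpow_left (p : ℝ) {q : ℝ} (hq : -1 < q) (t : ℝ) :
    IntervalIntegrable (fun s : ℝ => (t - s) ^ p * s ^ q) volume 0 (t / 2) := by
  rcases eq_or_ne t 0 with rfl | ht
  · simp
  refine (intervalIntegrable_rpow' hq).continuousOn_mul ?_
  refine ContinuousOn.rpow_const (by fun_prop) fun s hs => Or.inl (sub_ne_zero.2 ?_)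
  rintro rfl
  grind [mem_uIcc]

theorem intervalIntegrable_sub_rpow_mul_rpow {p q : ℝ} (hp : -1 < p) (hq : -1 < q) (t : ℝ) :
    IntervalIntegrable (fun s : ℝ => (t - s) ^ p * s ^ q) volume 0 t := by
  refine (intervalIntegrable_sub_rpow_mul_rpow_left p hq t).trans ?_
  have reflected := (intervalIntegrable_sub_rpow_mul_rpow_left q hp t).comp_sub_left t
  simpa only [sub_sub_cancel, sub_zero, sub_half, mul_comm] using reflected.symm

theorem lconv_comm (f g : ℝ → ℝ) : lconv f g = lconv g f := by
  funext t
  simpa [lconv, mul_comm] using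
    integral_comp_sub_left (a := 0) (b := t) (fun s => f s * g (t - s)) t

theorem lconv_one_left (f : ℝ → ℝ) : lconv 1 f = fun t => ∫ s in (0 : ℝ)..t, f s := by
  funext t
  simp [lconv]

theorem lconv_congr {f f' g g' : ℝ → ℝ} (hf : EqOn f f' (Ioi 0)) (hg : EqOn g g' (Ioi 0)) :
    EqOn (lconv f g) (lconv f' g') (Ioi 0) := by
  intro t ht
  refine integral_congr_Ioo_of_le (le_of_lt ht) fun s hs => ?_
  simp only [hf (mem_Ioi.2 (sub_pos.2 hs.2)), hg hs.1]

theorem lconv_rpow_mul (p q : ℝ) (f₁ g₁ : ℝ → ℝ) {t : ℝ} (ht : 0 < t) :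
    lconv (fun s => s ^ p * f₁ s) (fun s => s ^ q * g₁ s) t =
      t ^ (p + q + 1) *
        ∫ u in (0 : ℝ)..1, ((1 - u) ^ p * u ^ q) * (f₁ (t * (1 - u)) * g₁ (t * u)) := by
  have substitution := mul_integral_comp_mul_left (a := 0) (b := 1)
    (f := fun s => (t - s) ^ p * f₁ (t - s) * (s ^ q * g₁ s)) t
  rw [mul_zero, mul_one] at substitution
  rw [lconv, ← substitution, ← intervalIntegral.integral_const_mul,
    ← intervalIntegral.integral_const_mul]
  refine integral_congr_Ioo_of_le zero_le_one fun u hu => ?_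
  have hu' : 0 < 1 - u := sub_pos.2 hu.2
  have factor : t - t * u = t * (1 - u) := by ring
  simp only [factor, mul_rpow ht.le hu'.le, mul_rpow ht.le hu.1.le, rpow_add ht, rpow_one]
  ring

theorem indicator_lconv (f g : ℝ → ℝ) :
    (Ioi 0).indicator (lconv f g) =
      (Ioi 0).indicator f ⋆[ContinuousLinearMap.mul ℝ ℝ] (Ioi 0).indicator g := by
  rw [← posConvolution_eq_convolution_indicator f g (.mul ℝ ℝ) volume, lconv_comm]
  unfold posConvolution lconv
  simp only [ContinuousLinearMap.mul_apply', mul_comm]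

namespace CMinusOne

variable {f g h : ℝ → ℝ}

theorem congr (hf : CMinusOne f) (hgf : EqOn g f (Ioi 0)) : CMinusOne g := by
  obtain ⟨p, hp, f₁, hf₁, hf⟩ := hf
  exact ⟨p, hp, f₁, hf₁, fun t ht => (hgf ht).trans (hf t ht)⟩

theorem norm (hf : CMinusOne f) : CMinusOne fun t => ‖f t‖ := by
  obtain ⟨p, hp, f₁, hf₁, hf⟩ := hf
  refine ⟨p, hp, fun t => ‖f₁ t‖, hf₁.norm, fun t ht => ?_⟩
  simp only [hf t ht, norm_mul, norm_of_nonneg (rpow_nonneg ht.le p)]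

theorem exists_continuous (hf : CMinusOne f) :
    ∃ p : ℝ, -1 < p ∧ ∃ f₁ : ℝ → ℝ, Continuous f₁ ∧ EqOn f (fun t => t ^ p * f₁ t) (Ioi 0) := by
  obtain ⟨p, hp, f₁, hf₁, hf⟩ := hf
  refine ⟨p, hp, fun t => f₁ (max t 0), ?_, fun t ht => ?_⟩
  · exact hf₁.comp_continuous (by fun_prop) fun t => le_max_right t 0
  · simp only [max_eq_left (mem_Ioi.1 ht).le, hf t ht]

theorem continuousOn (hf : CMinusOne f) : ContinuousOn f (Ioi 0) := by
  obtain ⟨p, -, f₁, hf₁, hf⟩ := hf.exists_continuous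
  refine ContinuousOn.congr ?_ hf
  exact (continuousOn_id.rpow_const fun t ht => Or.inl (ne_of_gt ht)).mul hf₁.continuousOn

theorem intervalIntegrable (hf : CMinusOne f) {t : ℝ} (ht : 0 ≤ t) :
    IntervalIntegrable f volume 0 t := by
  obtain ⟨p, hp, f₁, hf₁, hf⟩ := hf.exists_continuous
  refine ((intervalIntegrable_rpow' hp).mul_continuousOn hf₁.continuousOn).congr_uIoo fun s hs => ?_
  rw [uIoo_of_le ht] at hs
  exact (hf hs.1).symm

theorem hasDerivAt_integral (hf : CMinusOne f) {t : ℝ} (ht : 0 < t) :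
    HasDerivAt (fun x => ∫ s in (0 : ℝ)..x, f s) (f t) t :=
  integral_hasDerivAt_right (hf.intervalIntegrable ht.le)
    (hf.continuousOn.stronglyMeasurableAtFilter isOpen_Ioi t ht)
    (hf.continuousOn.continuousAt (Ioi_mem_nhds ht))

theorem integrableOn_comp_sub_mul (hf : CMinusOne f) (hg : CMinusOne g) (t : ℝ) :
    IntegrableOn (fun s => f (t - s) * g s) (Ioo 0 t) := by
  rcases le_or_gt t 0 with ht | ht
  · simp [Ioo_eq_empty_of_le ht]
  obtain ⟨p, hp, f₁, hf₁, hf⟩ := hf.exists_continuous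
  obtain ⟨q, hq, g₁, hg₁, hg⟩ := hg.exists_continuous
  have weighted := (intervalIntegrable_sub_rpow_mul_rpow hp hq t).mul_continuousOn
    (g := fun s => f₁ (t - s) * g₁ s) (by fun_prop)
  rw [intervalIntegrable_iff_integrableOn_Ioo_of_le ht.le] at weighted
  refine weighted.congr_fun (fun s hs => ?_) measurableSet_Ioo
  simp only [hf (mem_Ioi.2 (sub_pos.2 hs.2)), hg hs.1]
  ring

protected theorem lconv (hf : CMinusOne f) (hg : CMinusOne g) : CMinusOne (lconv f g) := by
  obtain ⟨p, hp, f₁, hf₁, hf⟩ := hf.exists_continuous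
  obtain ⟨q, hq, g₁, hg₁, hg⟩ := hg.exists_continuous
  refine ⟨p + q + 1, by linarith, _, Continuous.continuousOn ?_, fun t ht =>
    (lconv_congr hf hg ht).trans (lconv_rpow_mul p q f₁ g₁ ht)⟩
  exact continuous_parametric_intervalIntegral_smul
    (intervalIntegrable_sub_rpow_mul_rpow hp hq 1)
    (F := fun t u => f₁ (t * (1 - u)) * g₁ (t * u)) (by fun_prop)

theorem aestronglyMeasurable_indicator (hf : CMinusOne f) :
    AEStronglyMeasurable ((Ioi 0).indicator f) :=
  (aestronglyMeasurable_indicator_iff measurableSet_Ioi).2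
    (hf.continuousOn.aestronglyMeasurable measurableSet_Ioi)

theorem convolutionExists_indicator (hf : CMinusOne f) (hg : CMinusOne g) :
    ConvolutionExists ((Ioi 0).indicator f) ((Ioi 0).indicator g)
      (ContinuousLinearMap.mul ℝ ℝ) := by
  intro t
  have integrand_eq : (fun s => (Ioi 0).indicator f s * (Ioi 0).indicator g (t - s)) =
      (Ioo 0 t).indicator fun s => g (t - s) * f s := by
    funext s
    by_cases h₀ : 0 < s <;> by_cases h₁ : s < t <;> simp [indicator, h₀, h₁, mul_comm]
  simp only [ConvolutionExistsAt, ContinuousLinearMap.mul_apply', integrand_eq]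
  exact (integrable_indicator_iff measurableSet_Ioo).2 (hg.integrableOn_comp_sub_mul hf t)

theorem lconv_assoc (hf : CMinusOne f) (hg : CMinusOne g) (hh : CMinusOne h) :
    EqOn (lconv (lconv f g) h) (lconv f (lconv g h)) (Ioi 0) := by
  intro t ht
  have norm_indicator (k : ℝ → ℝ) :
      (fun s => ‖(Ioi 0).indicator k s‖) = (Ioi 0).indicator fun s => ‖k s‖ :=
    funext (norm_indicator_eq_indicator_norm k)
  suffices (Ioi 0).indicator (lconv (lconv f g) h) t = (Ioi 0).indicator (lconv f (lconv g h)) t by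
    simpa only [indicator_of_mem ht] using this
  simp only [indicator_lconv]
  refine convolution_assoc _ _ _ _ (fun x y z => mul_assoc x y z)
    hf.aestronglyMeasurable_indicator hg.aestronglyMeasurable_indicator
    hh.aestronglyMeasurable_indicator (.of_forall (hf.convolutionExists_indicator hg))
    (.of_forall fun s => ?_) ?_
  · simpa only [norm_indicator] using hg.norm.convolutionExists_indicator hh.norm s
  · simpa only [norm_indicator, ← indicator_lconv] using
      hf.norm.convolutionExists_indicator (hg.norm.lconv hh.norm) t

end CMinusOne

theorem FirstLevelKernels.lconv_lconv_lconv_eqOn_integral {κ k₁ k₂ φ : ℝ → ℝ}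
    (hker : FirstLevelKernels κ k₁ k₂) (hφ : CMinusOne φ) :
    EqOn (lconv k₂ (lconv κ (lconv k₁ φ))) (fun t => ∫ s in (0 : ℝ)..t, φ s) (Ioi 0) := by
  obtain ⟨hκ, hk₁, hk₂, hone⟩ := hker
  have kernels_eq_one : EqOn (lconv k₂ (lconv κ k₁)) 1 (Ioi 0) := fun s hs => by
    rw [lconv_comm, hκ.lconv_assoc hk₁ hk₂ hs, hone s hs, Pi.one_apply]
  intro t ht
  calc
    lconv k₂ (lconv κ (lconv k₁ φ)) t = lconv k₂ (lconv (lconv κ k₁) φ) t :=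
      lconv_congr (eqOn_refl _ _) (hκ.lconv_assoc hk₁ hφ).symm ht
    _ = lconv (lconv k₂ (lconv κ k₁)) φ t := (hk₂.lconv_assoc (hκ.lconv hk₁) hφ ht).symm
    _ = lconv 1 φ t := lconv_congr kernels_eq_one (eqOn_refl _ _) ht
    _ = ∫ s in (0 : ℝ)..t, φ s := by rw [lconv_one_left]

/-- First fundamental theorem of FC for the 1st level GFD: for
`(κ, k₁, k₂) ∈ L₁¹` and `f ∈ C_{-1,(k₁)}(0,∞)` (i.e. `f = k₁ * φ` with
`φ ∈ C_{-1}(0,∞)`), with `g = κ * f` the function `k₂ * g` is differentiable on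
`(0,∞)`, its derivative belongs to `C_{-1}(0,∞)`, and
`(k₁ * d/dt (k₂ * g))(t) = f(t)` for all `t > 0`; that is,
`( 1L D_{(k₁,k₂)} I_{(κ)} f)(t) = f(t)`. -/
theorem first_fundamental_theorem_1L (κ k₁ k₂ f φ : ℝ → ℝ)
    (hker : FirstLevelKernels κ k₁ k₂) (hφ : CMinusOne φ)
    (hfφ : ∀ t > (0:ℝ), f t = lconv k₁ φ t) :
    (∀ t > (0:ℝ), DifferentiableAt ℝ (lconv k₂ (lconv κ f)) t) ∧
      CMinusOne (deriv (lconv k₂ (lconv κ f))) ∧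
      ∀ t > (0:ℝ), lconv k₁ (deriv (lconv k₂ (lconv κ f))) t = f t := by
  have lconv_eq_integral :
      EqOn (lconv k₂ (lconv κ f)) (fun t => ∫ s in (0 : ℝ)..t, φ s) (Ioi 0) :=
    (lconv_congr (eqOn_refl _ _) (lconv_congr (eqOn_refl _ _) hfφ)).trans
      (hker.lconv_lconv_lconv_eqOn_integral hφ)
  have hasDerivAt : ∀ t > 0, HasDerivAt (lconv k₂ (lconv κ f)) (φ t) t := fun t ht =>
    (hφ.hasDerivAt_integral ht).congr_of_eventuallyEq
      (lconv_eq_integral.eventuallyEq_of_mem (Ioi_mem_nhds ht))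
  have deriv_eq : EqOn (deriv (lconv k₂ (lconv κ f))) φ (Ioi 0) :=
    fun t ht => (hasDerivAt t ht).deriv
  exact ⟨fun t ht => (hasDerivAt t ht).differentiableAt, hφ.congr deriv_eq,
    fun t ht => (lconv_congr (eqOn_refl _ _) deriv_eq ht).trans (hfφ t ht).symm⟩
end

section
/- The Mittag-Leffler kernels form a Sonin pair from L₁: for 0 < α < β < 1, the functions κ(t) = h_{1−β+α}(t) + h_{1−β}(t) and k(t) = t^{β−1} E_{α,β}(−t^α) both belong to C_{-1}(0,∞) and satisfy the Sonin condition (κ * k)(t) = 1 for all t > 0. -/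
open Real Filter MeasureTheory intervalIntegral

/-- The class `L₁` of Sonin kernel pairs: `κ, k ∈ C_{-1}(0,∞)` with `(κ * k)(t) = 1`
for all `t > 0`. -/
def SoninPair (κ k : ℝ → ℝ) : Prop :=
  CMinusOne κ ∧ CMinusOne k ∧ ∀ t > (0:ℝ), lconv κ k t = 1


/-- The power law kernel `h_μ(t) = t^{μ-1}/Γ(μ)`. -/
noncomputable def hpow (μ : ℝ) : ℝ → ℝ := fun t => t ^ (μ - 1) / Real.Gamma μ

/-- The two-parameter Mittag-Leffler function
`E_{α,β}(z) = Σ_{n=0}^∞ z^n / Γ(αn + β)`. -/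
noncomputable def mittagLeffler (α β : ℝ) (z : ℝ) : ℝ :=
  ∑' n : ℕ, z ^ n / Real.Gamma (α * n + β)

/-! Write `K_β(t) = t^{β-1} E_{α,β}(c t^α) = Σ_n c^n h_{αn+β}(t)`. The Beta integral gives
`h_a * h_b = h_{a+b}`, and convolving the series term by term yields `h_μ * K_β = K_{μ+β}`; the
interchange is dominated by the same series with `|c|` in place of `c`, whose sum is again a kernel
in `C_{-1}` and hence has an integrable convolution integrand. Splitting off the first term of the
series gives `K_β = h_β + c K_{β+α}`. With `c = -1`, therefore,
`(h_{1-β+α} + h_{1-β}) * K_β = K_{1+α} + K_1 = h_1 = 1`. -/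

/-- The Mittag-Leffler kernel `t^{β-1} E_{α,β}(c t^α)`, with a coefficient `c` in the argument so
that the kernel `k` of the Sonin pair is the case `c = -1`. -/
noncomputable def mittagLefflerKernel (α β c : ℝ) : ℝ → ℝ :=
  fun t => t ^ (β - 1) * mittagLeffler α β (c * t ^ α)

section CMinusOne

variable {f g : ℝ → ℝ}

theorem CMinusOne.add (hf : CMinusOne f) (hg : CMinusOne g) : CMinusOne (fun t => f t + g t) := by
  obtain ⟨p, hp, f₁, hf₁, hf⟩ := hf
  obtain ⟨q, hq, g₁, hg₁, hg⟩ := hg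
  have continuousOn_shift {r : ℝ} (hr : min p q ≤ r) {u : ℝ → ℝ} (hu : ContinuousOn u (Set.Ici 0)) :
      ContinuousOn (fun t => t ^ (r - min p q) * u t) (Set.Ici 0) :=
    (continuous_rpow_const (sub_nonneg.2 hr)).continuousOn.mul hu
  refine ⟨min p q, lt_min hp hq, fun t => t ^ (p - min p q) * f₁ t + t ^ (q - min p q) * g₁ t,
    (continuousOn_shift (min_le_left p q) hf₁).add (continuousOn_shift (min_le_right p q) hg₁),
    fun t ht => ?_⟩
  simp only [hf t ht, hg t ht]
  rw [mul_add, ← mul_assoc, ← mul_assoc, ← rpow_add ht, ← rpow_add ht,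
    add_sub_cancel, add_sub_cancel]

theorem CMinusOne.const_mul (hf : CMinusOne f) (c : ℝ) : CMinusOne (fun t => c * f t) := by
  obtain ⟨p, hp, f₁, hf₁, hf⟩ := hf
  exact ⟨p, hp, fun t => c * f₁ t, hf₁.const_smul c,
    fun t ht => by simp only [hf t ht, mul_left_comm]⟩

theorem CMinusOne.abs (hf : CMinusOne f) : CMinusOne (fun t => |f t|) := by
  obtain ⟨p, hp, f₁, hf₁, hf⟩ := hf
  exact ⟨p, hp, fun t => |f₁ t|, hf₁.abs,
    fun t ht => by simp only [hf t ht, abs_mul, abs_of_pos (rpow_pos_of_pos ht p)]⟩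

theorem hpow_nonneg {μ t : ℝ} (hμ : 0 < μ) (ht : 0 ≤ t) : 0 ≤ hpow μ t :=
  div_nonneg (rpow_nonneg ht _) (Gamma_pos_of_pos hμ).le

theorem cMinusOne_hpow {μ : ℝ} (hμ : 0 < μ) : CMinusOne (hpow μ) :=
  ⟨μ - 1, by linarith, fun _ => 1 / Gamma μ, continuousOn_const, fun _ _ => div_eq_mul_one_div _ _⟩

end CMinusOne

section Beta

variable {a b t : ℝ}

theorem integral_rpow_mul_sub_rpow (ha : 0 < a) (hb : 0 < b) (ht : 0 < t) :
    ∫ τ in (0:ℝ)..t, τ ^ (a - 1) * (t - τ) ^ (b - 1)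
      = t ^ (a + b - 1) * ProbabilityTheory.beta a b := by
  have h := Complex.betaIntegral_scaled a b ht
  rw [Complex.betaIntegral_eq_Gamma_mul_div _ _ (by simpa) (by simpa)] at h
  apply Complex.ofReal_injective
  rw [← intervalIntegral.integral_ofReal]
  simp only [ProbabilityTheory.beta]
  push_cast [Complex.ofReal_cpow ht.le, ← Complex.Gamma_ofReal]
  rw [← h]
  refine intervalIntegral.integral_congr fun τ hτ => ?_
  rw [Set.uIcc_of_le ht.le] at hτ
  push_cast [Complex.ofReal_cpow hτ.1, Complex.ofReal_cpow (sub_nonneg.2 hτ.2)]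
  rfl

theorem intervalIntegrable_rpow_mul_sub_rpow (ha : 0 < a) (hb : 0 < b) (ht : 0 < t) :
    IntervalIntegrable (fun τ => τ ^ (a - 1) * (t - τ) ^ (b - 1)) volume 0 t := by
  apply intervalIntegrable_of_integral_ne_zero
  rw [integral_rpow_mul_sub_rpow ha hb ht]
  exact (mul_pos (rpow_pos_of_pos ht _) (ProbabilityTheory.beta_pos ha hb)).ne'

end Beta

section Convolution

variable {f g h : ℝ → ℝ} {t : ℝ}

theorem CMinusOne.intervalIntegrable_lconv (hf : CMinusOne f) (hg : CMinusOne g) (ht : 0 < t) :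
    IntervalIntegrable (fun τ => f (t - τ) * g τ) volume 0 t := by
  obtain ⟨p, hp, f₁, hf₁, hf⟩ := hf
  obtain ⟨q, hq, g₁, hg₁, hg⟩ := hg
  have hcont : ContinuousOn (fun τ => f₁ (t - τ) * g₁ τ) (Set.uIcc 0 t) := by
    rw [Set.uIcc_of_le ht.le]
    exact (hf₁.comp (by fun_prop) fun τ hτ => sub_nonneg.2 hτ.2).mul
      (hg₁.mono Set.Icc_subset_Ici_self)
  have hbeta := intervalIntegrable_rpow_mul_sub_rpow (a := q + 1) (b := p + 1)
    (by linarith) (by linarith) ht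
  refine (hbeta.mul_continuousOn hcont).congr_uIoo fun τ hτ => ?_
  rw [Set.uIoo_of_le ht.le] at hτ
  simp only [add_sub_cancel_right, hf (t - τ) (sub_pos.2 hτ.2), hg τ hτ.1]
  ring

theorem lconv_add_left (hf : CMinusOne f) (hg : CMinusOne g) (hh : CMinusOne h) (ht : 0 < t) :
    lconv (fun s => f s + g s) h t = lconv f h t + lconv g h t := by
  simp only [lconv, add_mul]
  exact intervalIntegral.integral_add (hf.intervalIntegrable_lconv hh ht)
    (hg.intervalIntegrable_lconv hh ht)

theorem lconv_const_mul_left (c : ℝ) (f h : ℝ → ℝ) (t : ℝ) :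
    lconv (fun s => c * f s) h t = c * lconv f h t := by
  simp only [lconv, mul_assoc, intervalIntegral.integral_const_mul]

theorem lconv_const_mul_right (c : ℝ) (f h : ℝ → ℝ) (t : ℝ) :
    lconv f (fun s => c * h s) t = c * lconv f h t := by
  simp only [lconv, mul_left_comm _ c, intervalIntegral.integral_const_mul]

theorem lconv_hpow_hpow {a b : ℝ} (ha : 0 < a) (hb : 0 < b) (ht : 0 < t) :
    lconv (hpow a) (hpow b) t = hpow (a + b) t := by
  have hΓa := (Gamma_pos_of_pos ha).ne'
  have hΓb := (Gamma_pos_of_pos hb).ne'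
  calc lconv (hpow a) (hpow b) t
      = ∫ τ in (0:ℝ)..t, (Gamma b * Gamma a)⁻¹ * (τ ^ (b - 1) * (t - τ) ^ (a - 1)) := by
        simp only [lconv, hpow]
        congr 1 with τ
        field_simp
    _ = (Gamma b * Gamma a)⁻¹ * (t ^ (b + a - 1) * ProbabilityTheory.beta b a) := by
        rw [intervalIntegral.integral_const_mul, integral_rpow_mul_sub_rpow hb ha ht]
    _ = hpow (a + b) t := by
        rw [hpow, ProbabilityTheory.beta, add_comm a b]
        field_simp

end Convolution

section GammaGrowth

variable {R : ℝ}

theorem rpow_mul_exp_div_le_Gamma {s : ℝ} (hR : 0 < R) (hs : 0 < s) :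
    R ^ s * (exp (-(R + 1)) / (R + 1)) ≤ Gamma s := by
  have hsub : Set.Ioc R (R + 1) ⊆ Set.Ioi 0 := fun x hx => hR.trans hx.1
  have hint := GammaIntegral_convergent hs
  calc R ^ s * (exp (-(R + 1)) / (R + 1))
      = ∫ _ in Set.Ioc R (R + 1), R ^ s * (exp (-(R + 1)) / (R + 1)) := by simp
    _ ≤ ∫ x in Set.Ioc R (R + 1), exp (-x) * x ^ (s - 1) := by
        refine setIntegral_mono_on (integrableOn_const (by simp)) (hint.mono_set hsub)
          measurableSet_Ioc fun x hx => ?_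
        obtain ⟨hRx, hxR⟩ := hx
        have hx : 0 < x := hR.trans hRx
        rw [rpow_sub_one hx.ne', mul_div_left_comm]
        gcongr
    _ ≤ ∫ x in Set.Ioi 0, exp (-x) * x ^ (s - 1) :=
        setIntegral_mono_set hint
          (ae_restrict_of_forall_mem measurableSet_Ioi fun x hx =>
            mul_nonneg (exp_nonneg _) (rpow_nonneg (le_of_lt hx) _))
          hsub.eventuallyLE
    _ = Gamma s := (Gamma_eq_integral hs).symm

theorem rpow_isBigO_Gamma (hR : 0 < R) : (fun s : ℝ => R ^ s) =O[atTop] Gamma := by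
  refine Asymptotics.IsBigO.of_bound (exp (-(R + 1)) / (R + 1))⁻¹ ?_
  filter_upwards [eventually_gt_atTop 0] with s hs
  rw [norm_of_nonneg (by positivity), norm_of_nonneg (Gamma_pos_of_pos hs).le,
    le_inv_mul_iff₀ (by positivity), mul_comm]
  exact rpow_mul_exp_div_le_Gamma hR hs

end GammaGrowth

section MittagLeffler

variable {α : ℝ}

theorem summable_mittagLeffler (hα : 0 < α) (β z : ℝ) :
    Summable (fun n : ℕ => z ^ n / Gamma (α * n + β)) := by
  set r := |z| + 1
  have hr : 0 < r := by positivity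
  set R := r ^ α⁻¹
  have hR : 0 < R := rpow_pos_of_pos hr _
  have hlin : Tendsto (fun n : ℕ => α * n + β) atTop atTop :=
    tendsto_atTop_add_const_right _ _ (tendsto_natCast_atTop_atTop.const_mul_atTop hα)
  have hinv : (fun n : ℕ => (Gamma (α * n + β))⁻¹) =O[atTop] fun n : ℕ => (R ^ (α * n + β))⁻¹ :=
    ((rpow_isBigO_Gamma hR).comp_tendsto hlin).inv_rev
      (.of_forall fun n h => absurd h (rpow_pos_of_pos hR _).ne')
  have hgeom (n : ℕ) : z ^ n * (R ^ (α * n + β))⁻¹ = (z / r) ^ n * (R ^ β)⁻¹ := by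
    rw [rpow_add hR, rpow_mul hR.le, rpow_inv_rpow hr.le hα.ne', rpow_natCast, div_pow]
    ring
  have hratio : |z / r| < 1 := by
    rw [abs_div, abs_of_pos hr, div_lt_one hr]
    exact lt_add_one _
  refine summable_of_isBigO_nat ?_ ((Asymptotics.isBigO_refl (fun n : ℕ => z ^ n) atTop).mul hinv)
  simp only [hgeom]
  exact (summable_geometric_of_abs_lt_one hratio).mul_right _

theorem hasSum_mittagLeffler (hα : 0 < α) (β z : ℝ) :
    HasSum (fun n : ℕ => z ^ n / Gamma (α * n + β)) (mittagLeffler α β z) :=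
  (summable_mittagLeffler hα β z).hasSum

theorem continuous_mittagLeffler (hα : 0 < α) (β : ℝ) : Continuous (mittagLeffler α β) := by
  have hball (r : ℝ) : ContinuousOn (mittagLeffler α β) (Metric.ball 0 r) := by
    refine continuousOn_tsum (fun n => by fun_prop) (summable_mittagLeffler hα β r).norm
      fun n z hz => ?_
    rw [norm_div, norm_div, norm_pow, norm_pow]
    have : ‖z‖ ≤ ‖r‖ := (mem_ball_zero_iff.1 hz).le.trans (le_norm_self r)
    gcongr
  exact continuous_iff_continuousAt.2 fun z =>
    (hball (‖z‖ + 1)).continuousAt (Metric.isOpen_ball.mem_nhds (by simp))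

theorem cMinusOne_mittagLefflerKernel {β : ℝ} (hα : 0 < α) (hβ : 0 < β) (c : ℝ) :
    CMinusOne (mittagLefflerKernel α β c) :=
  ⟨β - 1, by linarith, fun t => mittagLeffler α β (c * t ^ α),
    ((continuous_mittagLeffler hα β).comp
      ((continuous_rpow_const hα.le).const_mul c)).continuousOn, fun _ _ => rfl⟩

theorem hasSum_mittagLefflerKernel {t : ℝ} (hα : 0 < α) (β c : ℝ) (ht : 0 < t) :
    HasSum (fun n : ℕ => c ^ n * hpow (α * n + β) t) (mittagLefflerKernel α β c t) := by
  refine ((hasSum_mittagLeffler hα β (c * t ^ α)).mul_left (t ^ (β - 1))).congr_fun fun n => ?_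
  rw [hpow, add_sub_assoc, rpow_add ht, rpow_mul ht.le, rpow_natCast]
  ring

theorem mittagLefflerKernel_eq_hpow_add {t : ℝ} (hα : 0 < α) (β c : ℝ) (ht : 0 < t) :
    mittagLefflerKernel α β c t = hpow β t + c * mittagLefflerKernel α (β + α) c t := by
  have htail : HasSum (fun n : ℕ => c ^ (n + 1) * hpow (α * (n + 1 : ℕ) + β) t)
      (c * mittagLefflerKernel α (β + α) c t) := by
    refine ((hasSum_mittagLefflerKernel hα (β + α) c ht).mul_left c).congr_fun fun n => ?_
    rw [pow_succ', mul_assoc, Nat.cast_succ, mul_add_one, add_right_comm, add_assoc]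
  simpa using (hasSum_mittagLefflerKernel hα β c ht).unique htail.zero_add

theorem hasSum_lconv_mittagLefflerKernel {f : ℝ → ℝ} {β t : ℝ} (hf : CMinusOne f) (hα : 0 < α)
    (hβ : 0 < β) (c : ℝ) (ht : 0 < t) :
    HasSum (fun n : ℕ => c ^ n * lconv f (hpow (α * n + β)) t)
      (lconv f (mittagLefflerKernel α β c) t) := by
  have hpos {τ : ℝ} (hτ : τ ∈ Set.uIoc 0 t) : 0 < τ := (Set.uIoc_of_le ht.le ▸ hτ).1
  have hterm (n : ℕ) : CMinusOne (fun τ => c ^ n * hpow (α * n + β) τ) :=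
    (cMinusOne_hpow (by positivity)).const_mul _
  have hmajorant {τ : ℝ} (hτ : τ ∈ Set.uIoc 0 t) :
      HasSum (fun n : ℕ => |f (t - τ)| * (|c| ^ n * hpow (α * n + β) τ))
        (|f (t - τ)| * mittagLefflerKernel α β |c| τ) :=
    (hasSum_mittagLefflerKernel hα β |c| (hpos hτ)).mul_left _
  simp only [← lconv_const_mul_right]
  refine intervalIntegral.hasSum_integral_of_dominated_convergence
    (fun n τ => |f (t - τ)| * (|c| ^ n * hpow (α * n + β) τ))
    (fun n => (hf.intervalIntegrable_lconv (hterm n) ht).def'.aestronglyMeasurable)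
    (fun n => .of_forall fun τ hτ => ?_) (.of_forall fun τ hτ => (hmajorant hτ).summable) ?_
    (.of_forall fun τ hτ => (hasSum_mittagLefflerKernel hα β c (hpos hτ)).mul_left _)
  · rw [norm_mul, norm_mul, norm_pow, norm_of_nonneg (hpow_nonneg (by positivity) (hpos hτ).le)]
    rfl
  · exact (hf.abs.intervalIntegrable_lconv (cMinusOne_mittagLefflerKernel hα hβ |c|) ht).congr
      fun τ hτ => (hmajorant hτ).tsum_eq.symm

theorem lconv_hpow_mittagLefflerKernel {μ β t : ℝ} (hμ : 0 < μ) (hα : 0 < α) (hβ : 0 < β) (c : ℝ)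
    (ht : 0 < t) :
    lconv (hpow μ) (mittagLefflerKernel α β c) t = mittagLefflerKernel α (μ + β) c t := by
  refine (hasSum_lconv_mittagLefflerKernel (cMinusOne_hpow hμ) hα hβ c ht).unique ?_
  convert hasSum_mittagLefflerKernel hα (μ + β) c ht using 3 with n
  rw [lconv_hpow_hpow hμ (by positivity) ht, add_left_comm]

end MittagLeffler

theorem mittag_leffler_sonin_pair_general {α β : ℝ} (hα : 0 < α) (hβ₀ : 0 < β) (hβ₁ : β < 1)
    (c : ℝ) :
    SoninPair (fun t => c * hpow (1 - β + α) t + hpow (1 - β) t)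
      (fun t => t ^ (β - 1) * mittagLeffler α β (-c * t ^ α)) := by
  have hμ : 0 < 1 - β := sub_pos.2 hβ₁
  have hμα : 0 < 1 - β + α := by positivity
  have hκ₁ : CMinusOne (fun t => c * hpow (1 - β + α) t) := (cMinusOne_hpow hμα).const_mul c
  have hκ₂ : CMinusOne (hpow (1 - β)) := cMinusOne_hpow hμ
  have hk : CMinusOne (mittagLefflerKernel α β (-c)) := cMinusOne_mittagLefflerKernel hα hβ₀ (-c)
  refine ⟨hκ₁.add hκ₂, hk, fun t ht => ?_⟩
  calc lconv (fun t => c * hpow (1 - β + α) t + hpow (1 - β) t) (mittagLefflerKernel α β (-c)) t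
      = c * lconv (hpow (1 - β + α)) (mittagLefflerKernel α β (-c)) t
          + lconv (hpow (1 - β)) (mittagLefflerKernel α β (-c)) t := by
        rw [lconv_add_left hκ₁ hκ₂ hk ht, lconv_const_mul_left]
    _ = c * mittagLefflerKernel α (1 + α) (-c) t + mittagLefflerKernel α 1 (-c) t := by
        rw [lconv_hpow_mittagLefflerKernel hμα hα hβ₀ (-c) ht,
          lconv_hpow_mittagLefflerKernel hμ hα hβ₀ (-c) ht, sub_add_cancel, sub_add_eq_add_sub,
          sub_add_cancel]
    _ = hpow 1 t := by
        rw [mittagLefflerKernel_eq_hpow_add hα 1 (-c) ht]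
        ring
    _ = 1 := by simp [hpow]

/-- The Mittag-Leffler kernels form a Sonin pair from `L₁`: for `0 < α < β < 1`,
the functions `κ(t) = h_{1−β+α}(t) + h_{1−β}(t)` and `k(t) = t^{β−1} E_{α,β}(−t^α)`
both belong to `C_{-1}(0,∞)` and satisfy the Sonin condition `(κ * k)(t) = 1`
for all `t > 0`. -/
theorem mittag_leffler_sonin_pair (α β : ℝ) (hα : 0 < α) (hαβ : α < β)
    (hβ : β < 1) :
    SoninPair (fun t => hpow (1 - β + α) t + hpow (1 - β) t)
      (fun t => t ^ (β - 1) * mittagLeffler α β (-(t ^ α))) := by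
  simpa using mittag_leffler_sonin_pair_general hα (hα.trans hαβ) hβ 1
end
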